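/- Let X and Y be coarse disjoint unions of expander graphs, let k ∈ ℕ, and let X̄ and Ȳ be k-stackings of X and Y respectively. Then X and Y are bijectively coarsely equivalent if and only if X̄ and Ȳ are bijectively coarsely equivalent. -/

import Mathlib

/-!
Composing a bijective coarse equivalence `Xb → Yb` with the identifications `Xb ≃ X × Fin k` and
`Yb ≃ Y × Fin k` gives a bijection `E : X × Fin k ≃ Y × Fin k`, which is the same thing as a
`k`-regular bipartite multigraph between `X` and `Y`: each `(x, i)` is an edge from `x` to the
first coordinate of `E (x, i)`. Counting edges shows that Hall's condition holds on both sides,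
so there are injections `X → Y` and `Y → X` along edges (`exists_injective_along`), and the
Schröder–Bernstein argument merges them into a perfect matching (`exists_bijective_along`).
The matching is a bijection `X → Y` close to the composite `X → Xb → Yb → Y`. The outer maps
`x ↦ (x, 0)` and `(y, j) ↦ y` are coarse equivalences, hence so is the matching.

Conversely, a bijective coarse equivalence `f : X → Y` induces the bijection
`(x, i) ↦ (f x, i)`, which is close to the composite `Xb → X → Y → Yb`.
-/

open Metric Set

noncomputable section

/-- A map between metric spaces is *coarse* if for every `r > 0` there is `s > 0` such that
points at distance `< r` are mapped to points at distance `< s`. -/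
def CoarseMap {X Y : Type*} [MetricSpace X] [MetricSpace Y] (f : X → Y) : Prop :=
  ∀ r : ℝ, 0 < r → ∃ s : ℝ, 0 < s ∧ ∀ x z : X, dist x z < r → dist (f x) (f z) < s

/-- Two maps into a metric space are *close* if they are at uniformly bounded distance. -/
def CloseMaps {X Y : Type*} [MetricSpace Y] (f g : X → Y) : Prop :=
  ∃ C : ℝ, ∀ x : X, dist (f x) (g x) ≤ C

/-- A coarse map is a *coarse equivalence* if it has a coarse inverse up to closeness. -/
def CoarseEquivMap {X Y : Type*} [MetricSpace X] [MetricSpace Y] (f : X → Y) : Prop :=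
  CoarseMap f ∧ ∃ g : Y → X, CoarseMap g ∧ CloseMaps (g ∘ f) id ∧ CloseMaps (f ∘ g) id

/-- Two metric spaces are *bijectively coarsely equivalent* if there is a bijective coarse
equivalence between them. -/
def BijCoarseEquiv (X Y : Type*) [MetricSpace X] [MetricSpace Y] : Prop :=
  ∃ f : X → Y, Function.Bijective f ∧ CoarseEquivMap f

/-- A metric space is *uniformly locally finite* if there is a uniform bound on the
cardinality of balls of any fixed radius. -/
def IsULFSpace (X : Type*) [MetricSpace X] : Prop :=
  ∀ r : ℝ, 0 < r → ∃ N : ℕ, ∀ x : X,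
    (Metric.closedBall x r).Finite ∧ (Metric.closedBall x r).ncard ≤ N

/-- A map is *uniformly finite-to-one* if preimages of singletons have uniformly bounded size. -/
def UnifFiniteToOne {X Y : Type*} (f : X → Y) : Prop :=
  ∃ m : ℕ, ∀ y : Y, (f ⁻¹' {y}).Finite ∧ (f ⁻¹' {y}).ncard ≤ m

/-- A u.l.f. metric space is *non-amenable* if for every `C > 1` there is `r > 0` such that
`|N_r(S)| ≥ C |S|` for every finite `S`. -/
def NonAmenableSpace (X : Type*) [MetricSpace X] : Prop :=
  ∀ C : ℝ, 1 < C → ∃ r : ℝ, 0 < r ∧ ∀ S : Set X, S.Finite →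
    C * (S.ncard : ℝ) ≤ (({x : X | ∃ s ∈ S, dist x s ≤ r}).ncard : ℝ)

/-- The outer `r`-boundary of a set `A`: points outside `A` at distance at most `r` from `A`. -/
def outerBdry {X : Type*} [MetricSpace X] (r : ℝ) (A : Set X) : Set X :=
  {x : X | x ∉ A ∧ ∃ a ∈ A, dist x a ≤ r}

/-- `Xn` is a partition of the ambient space into finite pieces whose mutual distances tend
to infinity: a *coarse disjoint union*. -/
def IsCDU {X : Type*} [MetricSpace X] (Xn : ℕ → Set X) : Prop :=
  (∀ x : X, ∃! n : ℕ, x ∈ Xn n) ∧ (∀ n : ℕ, (Xn n).Finite) ∧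
  ∀ R : ℝ, ∃ k : ℕ, ∀ m n : ℕ, m ≠ n → k ≤ m + n →
    ∀ x ∈ Xn m, ∀ y ∈ Xn n, R ≤ dist x y

/-- A subset is `t`-connected if any two of its points are joined by a chain in the subset
with consecutive distances at most `t`. -/
def TConnSubset {X : Type*} [MetricSpace X] (t : ℝ) (S : Set X) : Prop :=
  ∀ x ∈ S, ∀ y ∈ S, ∃ (m : ℕ) (c : ℕ → X), c 0 = x ∧ c m = y ∧
    (∀ i : ℕ, i ≤ m → c i ∈ S) ∧ ∀ i : ℕ, i < m → dist (c i) (c (i + 1)) ≤ t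

/-- The metric restricted to `S` is the shortest path metric of the graph on `S` whose edges
are the pairs at distance `1`: any two points of `S` are joined by a chain of unit-distance
steps in `S` whose length realizes their distance. -/
def GraphMetricOn {X : Type*} [MetricSpace X] (S : Set X) : Prop :=
  ∀ x ∈ S, ∀ y ∈ S, ∃ (m : ℕ) (c : ℕ → X), dist x y = (m : ℝ) ∧ c 0 = x ∧ c m = y ∧
    (∀ i : ℕ, i ≤ m → c i ∈ S) ∧ ∀ i : ℕ, i < m → dist (c i) (c (i + 1)) = 1

/-- `S` is a `(k,h)`-expander graph (with its shortest path metric): vertex degrees are at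
most `k` and `|∂ A| ≥ h (1 - |A|/|S|) |A|` for every `A ⊆ S`. -/
def ExpanderGraphSet {X : Type*} [MetricSpace X] (k : ℕ) (h : ℝ) (S : Set X) : Prop :=
  GraphMetricOn S ∧
  (∀ x ∈ S, ({z : X | z ∈ S ∧ z ≠ x ∧ dist z x ≤ 1}).ncard ≤ k) ∧
  ∀ A : Set X, A ⊆ S →
    h * (1 - (A.ncard : ℝ) / (S.ncard : ℝ)) * (A.ncard : ℝ) ≤ ((outerBdry 1 A ∩ S).ncard : ℝ)

/-- `Xn` is a sequence of expander graphs: all are `(k,h)`-expanders for fixed `k, h` and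
their cardinalities tend to infinity. -/
def ExpanderSeq {X : Type*} [MetricSpace X] (Xn : ℕ → Set X) : Prop :=
  ∃ (k : ℕ) (h : ℝ), 0 < h ∧ (∀ n : ℕ, ExpanderGraphSet k h (Xn n)) ∧
    Filter.Tendsto (fun n => (Xn n).ncard) Filter.atTop Filter.atTop

/-- `a : X → ℤ` is a boundary in uniformly finite homology: `a x = ∑_z (b x z - b z x)` for a
bounded `b` supported at bounded distance from the diagonal. -/
def UFBoundary {X : Type*} [MetricSpace X] (a : X → ℤ) : Prop :=
  ∃ (b : X → X → ℤ) (K : ℤ) (r : ℝ),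
    (∀ x z : X, |b x z| ≤ K) ∧ (∀ x z : X, b x z ≠ 0 → dist x z ≤ r) ∧
    ∀ x : X, a x = ∑ᶠ z : X, (b x z - b z x)

/-- `Xb` is a `k`-stacking of `X` (via an identification `e : Xb ≃ X × Fin k`): the map
`x ↦ (x, 0)` is a coarse equivalence and the points `(x, i)`, `(x, j)` are at uniformly
bounded distance. -/
def IsKStacking {X Xb : Type*} [MetricSpace X] [MetricSpace Xb] {k : ℕ} (hk : 0 < k)
    (e : Xb ≃ X × Fin k) : Prop :=
  CoarseEquivMap (fun x : X => e.symm (x, ⟨0, hk⟩)) ∧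
  ∃ C : ℝ, ∀ (x : X) (i j : Fin k), dist (e.symm (x, i)) (e.symm (x, j)) ≤ C

section CoarseCalculus

variable {X Y Z : Type*} [MetricSpace X] [MetricSpace Y] [MetricSpace Z]

lemma CoarseMap.comp {g : Y → Z} {f : X → Y} (hg : CoarseMap g) (hf : CoarseMap f) :
    CoarseMap (g ∘ f) := by
  intro r hr
  obtain ⟨s, hs, h⟩ := hf r hr
  obtain ⟨t, ht, h'⟩ := hg s hs
  exact ⟨t, ht, fun x z hxz => h' _ _ (h x z hxz)⟩

lemma CloseMaps.symm {A : Type*} {f g : A → Y} (h : CloseMaps f g) : CloseMaps g f := by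
  obtain ⟨C, hC⟩ := h
  exact ⟨C, fun x => by rw [dist_comm]; exact hC x⟩

lemma CloseMaps.trans {A : Type*} {f g l : A → Y} (h : CloseMaps f g) (h' : CloseMaps g l) :
    CloseMaps f l := by
  obtain ⟨C, hC⟩ := h
  obtain ⟨D, hD⟩ := h'
  exact ⟨C + D, fun x => (dist_triangle _ (g x) _).trans (add_le_add (hC x) (hD x))⟩

lemma CloseMaps.comp_right {A B : Type*} {f g : A → Y} (h : CloseMaps f g) (u : B → A) :
    CloseMaps (f ∘ u) (g ∘ u) := by
  obtain ⟨C, hC⟩ := h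
  exact ⟨C, fun x => hC (u x)⟩

lemma CoarseMap.comp_close {A : Type*} {f g : A → Y} {u : Y → Z} (hu : CoarseMap u)
    (h : CloseMaps f g) : CloseMaps (u ∘ f) (u ∘ g) := by
  obtain ⟨C, hC⟩ := h
  -- `C` may be negative when `A` is empty, and coarseness needs a strict, positive radius.
  obtain ⟨s, -, hs⟩ := hu (max C 0 + 1) (by positivity)
  exact ⟨s, fun x => (hs _ _ ((hC x).trans_lt
    ((le_max_left C 0).trans_lt (lt_add_one _)))).le⟩

lemma CoarseMap.of_close {f g : X → Y} (hf : CoarseMap f) (h : CloseMaps g f) :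
    CoarseMap g := by
  obtain ⟨C, hC⟩ := h
  intro r hr
  obtain ⟨s, hs, hs'⟩ := hf r hr
  refine ⟨s + 2 * max C 0, by positivity, fun x z hxz => ?_⟩
  have h1 := hC x
  have h2 := hC z
  have h3 := dist_triangle4 (g x) (f x) (f z) (g z)
  have h4 := hs' x z hxz
  have h5 := le_max_left C 0
  rw [dist_comm (f z)] at h3
  linarith

lemma CoarseEquivMap.of_close {f g : X → Y} (hf : CoarseEquivMap f) (h : CloseMaps g f) :
    CoarseEquivMap g := by
  obtain ⟨hc, u, hu, h1, h2⟩ := hf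
  exact ⟨hc.of_close h, u, hu, (hu.comp_close h).trans h1, (h.comp_right u).trans h2⟩

lemma CoarseEquivMap.comp {g : Y → Z} {f : X → Y} (hg : CoarseEquivMap g)
    (hf : CoarseEquivMap f) : CoarseEquivMap (g ∘ f) := by
  obtain ⟨hgc, v, hv, hvg, hgv⟩ := hg
  obtain ⟨hfc, u, hu, huf, hfu⟩ := hf
  exact ⟨hgc.comp hfc, u ∘ v, hu.comp hv,
    (hu.comp_close (hvg.comp_right f)).trans huf,
    (hgc.comp_close (hfu.comp_right v)).trans hgv⟩

end CoarseCalculus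

/-- The projection `(x, i) ↦ x` of a stacking is a coarse equivalence: it is close to any coarse
inverse of `x ↦ (x, 0)`. -/
lemma IsKStacking.coarseEquivMap_fst {X Xb : Type*} [MetricSpace X] [MetricSpace Xb] {k : ℕ}
    {hk : 0 < k} {e : Xb ≃ X × Fin k} (h : IsKStacking hk e) :
    CoarseEquivMap (fun a : Xb => (e a).1) := by
  obtain ⟨⟨hι, g, hg, hgι, hιg⟩, C, hC⟩ := h
  have hclose : CloseMaps ((fun x : X => e.symm (x, ⟨0, hk⟩)) ∘ fun a : Xb => (e a).1) id := by
    refine ⟨C, fun a => ?_⟩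
    simpa using hC (e a).1 ⟨0, hk⟩ (e a).2
  have hπ : CloseMaps (fun a : Xb => (e a).1) g :=
    (hgι.comp_right (fun a : Xb => (e a).1)).symm.trans (hg.comp_close hclose)
  exact ⟨hg.of_close hπ, _, hι, hclose, ⟨0, fun x => by simp⟩⟩

/-- In the `k`-regular bipartite multigraph encoded by `E`, there is a matching that covers the
left side. -/
lemma exists_injective_along {A B : Type*} {k : ℕ} (hk : 0 < k) (E : A × Fin k ≃ B × Fin k) :
    ∃ f : A → B, Function.Injective f ∧ ∀ a, ∃ i j, E (a, i) = (f a, j) := by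
  classical
  obtain ⟨f, hf, hmem⟩ := (Finset.all_card_le_biUnion_card_iff_exists_injective
    (fun a : A => Finset.univ.image fun i => (E (a, i)).1)).1 (fun s => by
      -- The `k * #s` edges leaving `s` all end in the neighbourhood of `s`, and each point of
      -- that neighbourhood is the end of only `k` edges.
      have hsub : (s ×ˢ (Finset.univ : Finset (Fin k))).map E.toEmbedding ⊆
          (s.biUnion fun a => Finset.univ.image fun i => (E (a, i)).1) ×ˢ Finset.univ := by
        intro p hp
        obtain ⟨⟨a, i⟩, hai, rfl⟩ := Finset.mem_map.1 hp
        simp only [Finset.mem_product, Finset.mem_univ, and_true, Finset.mem_biUnion,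
          Finset.mem_image, true_and] at hai ⊢
        exact ⟨a, hai, i, rfl⟩
      have hcard := Finset.card_le_card hsub
      rw [Finset.card_map, Finset.card_product, Finset.card_product, Finset.card_univ,
        Fintype.card_fin] at hcard
      exact Nat.le_of_mul_le_mul_right hcard hk)
  refine ⟨f, hf, fun a => ?_⟩
  obtain ⟨i, -, hi⟩ := Finset.mem_image.1 (hmem a)
  exact ⟨i, (E (a, i)).2, Prod.ext hi rfl⟩

/-- A `k`-regular bipartite multigraph, possibly infinite, has a perfect matching. -/
lemma exists_bijective_along {A B : Type*} {k : ℕ} (hk : 0 < k) (E : A × Fin k ≃ B × Fin k) :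
    ∃ f : A → B, Function.Bijective f ∧ ∀ a, ∃ i j, E (a, i) = (f a, j) := by
  obtain ⟨f, hf, hfE⟩ := exists_injective_along hk E
  obtain ⟨g, hg, hgE⟩ := exists_injective_along hk E.symm
  refine Function.Embedding.schroeder_bernstein_of_rel hf hg
    (fun a b => ∃ i j, E (a, i) = (b, j)) hfE fun b => ?_
  obtain ⟨j, i, h⟩ := hgE b
  exact ⟨i, j, by rw [← h, E.apply_symm_apply]⟩

/-- Let `X` and `Y` be coarse disjoint unions of expander graphs and let
`Xb`, `Yb` be `k`-stackings of `X` and `Y`. Then `X` and `Y` are bijectively coarsely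
equivalent iff `Xb` and `Yb` are. -/
theorem stmt13 {X Y Xb Yb : Type*}
    [MetricSpace X] [MetricSpace Y] [MetricSpace Xb] [MetricSpace Yb]
    (Xn : ℕ → Set X) (Yn : ℕ → Set Y)
    (hX : IsCDU Xn) (hY : IsCDU Yn) (hXe : ExpanderSeq Xn) (hYe : ExpanderSeq Yn)
    {k : ℕ} (hk : 0 < k) (eX : Xb ≃ X × Fin k) (eY : Yb ≃ Y × Fin k)
    (hXb : IsKStacking hk eX) (hYb : IsKStacking hk eY) :
    BijCoarseEquiv X Y ↔ BijCoarseEquiv Xb Yb := by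
  constructor
  · rintro ⟨f, hf, hfc⟩
    refine ⟨fun a => eY.symm (f (eX a).1, (eX a).2), ?_, ?_⟩
    · exact eY.symm.bijective.comp ((hf.prodMap Function.bijective_id).comp eX.bijective)
    · obtain ⟨C, hC⟩ := hYb.2
      exact (hYb.1.comp (hfc.comp hXb.coarseEquivMap_fst)).of_close
        ⟨C, fun a => hC _ _ _⟩
  · rintro ⟨F, hF, hFc⟩
    obtain ⟨f, hf, hfE⟩ := exists_bijective_along hk
      ((eX.symm.trans (Equiv.ofBijective F hF)).trans eY)
    refine ⟨f, hf, (hYb.coarseEquivMap_fst.comp (hFc.comp hXb.1)).of_close ?_⟩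
    -- `f x` is the projection of `F (x, i)` for some `i`, and `(x, i)` is uniformly close to
    -- `(x, 0)`.
    choose i j hij using hfE
    obtain ⟨C, hC⟩ := hXb.2
    have hι : CloseMaps (fun x => eX.symm (x, i x)) (fun x => eX.symm (x, ⟨0, hk⟩)) :=
      ⟨C, fun x => hC x _ _⟩
    have hfeq : f = (fun b => (eY b).1) ∘ F ∘ fun x => eX.symm (x, i x) :=
      funext fun x => (congrArg Prod.fst (hij x)).symm
    rw [hfeq]
    exact hYb.coarseEquivMap_fst.1.comp_close (hFc.1.comp_close hι)
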